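/- There exists a constant C > 0 such that for every T > 0 and every smooth solution u of the 1-dimensional Schrödinger flow with Neumann boundary conditions on [0,T], for all t ∈ [0,T]: (d/dt) ∫₀¹ |∂_t∂_x u(x,t)|² dx ≤ C ( ‖u(·,t)‖²_{H²} + ‖∂_t u(·,t)‖²_{L²} + 1 )³ ( ∫₀¹ |∂_t∂_x u(x,t)|² dx + 1 ). -/

import Mathlib

open MeasureTheory Set

noncomputable section

abbrev E3 := EuclideanSpace ℝ (Fin 3)

/-- The cross product on `EuclideanSpace ℝ (Fin 3)`. -/
def cross3 (a b : E3) : E3 :=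
  (WithLp.equiv 2 (Fin 3 → ℝ)).symm
    (crossProduct ((WithLp.equiv 2 (Fin 3 → ℝ)) a) ((WithLp.equiv 2 (Fin 3 → ℝ)) b))

/-- Partial derivative in the space variable of `u = u x t`. -/
def pdx (u : ℝ → ℝ → E3) : ℝ → ℝ → E3 := fun x t => deriv (fun y => u y t) x

/-- Partial derivative in the time variable of `u = u x t`. -/
def pdt (u : ℝ → ℝ → E3) : ℝ → ℝ → E3 := fun x t => deriv (fun s => u x s) t

/-- `u` is a smooth solution of the 1-dimensional Schrödinger flow with Neumann
boundary conditions on `[0,1] × [0,T]`. -/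
def IsSol (T : ℝ) (u : ℝ → ℝ → E3) : Prop :=
  ContDiff ℝ (⊤ : ℕ∞) (fun p : ℝ × ℝ => u p.1 p.2) ∧
  (∀ x ∈ Icc (0:ℝ) 1, ∀ t ∈ Icc (0:ℝ) T, ‖u x t‖ = 1) ∧
  (∀ x ∈ Icc (0:ℝ) 1, ∀ t ∈ Icc (0:ℝ) T, pdt u x t = cross3 (u x t) (pdx (pdx u) x t)) ∧
  (∀ t ∈ Icc (0:ℝ) T, pdx u 0 t = 0 ∧ pdx u 1 t = 0)

/-- Squared `L²` norm on `[0,1]`. -/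
def L2sq (f : ℝ → E3) : ℝ := ∫ x in (0:ℝ)..1, ‖f x‖ ^ 2

/-- Squared `H^k` Sobolev norm on `[0,1]`. -/
def Hsq (k : ℕ) (f : ℝ → E3) : ℝ :=
  ∑ j ∈ Finset.range (k + 1), ∫ x in (0:ℝ)..1, ‖deriv^[j] f x‖ ^ 2

/-!
Write `v = ∂ₜu` and `w = ∂ₓ∂ₜu = ∂ₜ∂ₓu`. Differentiating the equation in time gives
`∂ₜv = u × ∂ₓ²v + v × ∂ₓ²u`. The function `⟪w, ∂ₜv - v × ∂ₓ²u⟫ = ⟪w, u × ∂ₓw⟫` vanishes at both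
endpoints, and integrating its derivative yields the energy identity
`d/dt ∫ ‖w‖² = 2 ∫ ⟪w, v × ∂ₓ³u⟫`, in which no derivative of `w` is left. Since `‖u‖ = 1`, the
equation can be solved for the highest derivative, `∂ₓ²u = -(u × v) - ‖∂ₓu‖² u`; one more
derivative in `x` expresses `∂ₓ³u` through `u, ∂ₓu, ∂ₓ²u, v, w`. Because `v ⊥ u` and
`⟪u, w⟫ = -⟪∂ₓu, v⟫`, the integrand becomes linear in `w`. Young's inequality and the embedding
`H¹ ⊆ L^∞`, applied to `∂ₓu` and `v`, conclude.
-/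

open scoped InnerProductSpace ContDiff

section Calculus

lemma hasDerivAt_unique_of_eqOn_Icc {F : Type*} [NormedAddCommGroup F] [NormedSpace ℝ F]
    {f g : ℝ → F} {f' g' : F} {a b t : ℝ} (hab : a < b) (ht : t ∈ Icc a b)
    (hf : HasDerivAt f f' t) (hg : HasDerivAt g g' t) (hfg : EqOn f g (Icc a b)) : f' = g' :=
  (uniqueDiffOn_Icc hab t ht).eq_deriv _ hf.hasDerivWithinAt
    (hg.hasDerivWithinAt.congr hfg (hfg ht))

lemma hasDerivAt_intervalIntegral_of_continuous {F : Type*} [NormedAddCommGroup F]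
    [NormedSpace ℝ F] {f f' : ℝ → ℝ → F} (hf : ∀ s, Continuous (f s)) (hf' : Continuous ↿f')
    (hd : ∀ s x, HasDerivAt (fun r => f r x) (f' s x) s) (a b t : ℝ) :
    HasDerivAt (fun s => ∫ x in a..b, f s x) (∫ x in a..b, f' t x) t := by
  obtain ⟨B, hB⟩ := ((isCompact_Icc (a := t - 1) (b := t + 1)).prod
    (isCompact_uIcc (a := a) (b := b))).exists_bound_of_continuousOn hf'.continuousOn
  refine (intervalIntegral.hasDerivAt_integral_of_dominated_loc_of_deriv_le
    (F := f) (F' := f') (bound := fun _ => B)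
    (Icc_mem_nhds (sub_one_lt t) (lt_add_one t)) ?_ ?_ ?_ ?_ ?_ ?_).2
  · exact Filter.Eventually.of_forall fun s => (hf s).aestronglyMeasurable
  · exact (hf t).intervalIntegrable _ _
  · exact (hf'.comp (Continuous.prodMk_right t)).aestronglyMeasurable
  · exact Filter.Eventually.of_forall fun x hx s hs => hB (s, x) ⟨hs, uIoc_subset_uIcc hx⟩
  · exact continuous_const.intervalIntegrable _ _
  · exact Filter.Eventually.of_forall fun x _ s _ => hd s x

variable {H : Type*} [NormedAddCommGroup H] [InnerProductSpace ℝ H] {f f' : ℝ → H} {a b : ℝ}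

lemma inner_eq_zero_of_norm_eq_one {x : ℝ} {v : H} (hab : a < b) (hx : x ∈ Icc a b)
    (hf : HasDerivAt f v x) (hnorm : ∀ y ∈ Icc a b, ‖f y‖ = 1) : ⟪f x, v⟫_ℝ = 0 := by
  have h : 2 * ⟪f x, v⟫_ℝ = 0 := hasDerivAt_unique_of_eqOn_Icc hab hx hf.norm_sq
    (hasDerivAt_const x (1 : ℝ)) fun y hy => by simp [hnorm y hy]
  linarith

lemma inner_eq_neg_norm_sq_of_norm_eq_one {x : ℝ} {c : H} (hab : a < b) (hx : x ∈ Icc a b)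
    (hf : ∀ y ∈ Icc a b, HasDerivAt f (f' y) y) (hf' : HasDerivAt f' c x)
    (hnorm : ∀ y ∈ Icc a b, ‖f y‖ = 1) : ⟪f x, c⟫_ℝ = -‖f' x‖ ^ 2 := by
  have h := hasDerivAt_unique_of_eqOn_Icc hab hx ((hf x hx).inner ℝ hf')
    (hasDerivAt_const x (0 : ℝ)) fun y hy => inner_eq_zero_of_norm_eq_one hab hy (hf y hy) hnorm
  rw [real_inner_self_eq_norm_sq] at h
  linarith

lemma norm_sq_sub_norm_sq_le_integral {x y : ℝ} (hf : ∀ z ∈ Icc a b, HasDerivAt f (f' z) z)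
    (hf' : ContinuousOn f' (Icc a b)) (hx : x ∈ Icc a b) (hy : y ∈ Icc a b) :
    ‖f x‖ ^ 2 - ‖f y‖ ^ 2 ≤ ∫ z in a..b, (‖f z‖ ^ 2 + ‖f' z‖ ^ 2) := by
  have hab : a ≤ b := hx.1.trans hx.2
  have hsub : uIcc y x ⊆ Icc a b := ordConnected_Icc.uIcc_subset hy hx
  have hcf : ContinuousOn f (Icc a b) := fun z hz => (hf z hz).continuousAt.continuousWithinAt
  have hsum : ContinuousOn (fun z => ‖f z‖ ^ 2 + ‖f' z‖ ^ 2) (Icc a b) := by fun_prop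
  have hint {g : ℝ → ℝ} (hg : ContinuousOn g (Icc a b)) : IntervalIntegrable g volume y x :=
    (hg.mono hsub).intervalIntegrable
  have two_inner_le (z : ℝ) : ‖2 * ⟪f z, f' z⟫_ℝ‖ ≤ ‖f z‖ ^ 2 + ‖f' z‖ ^ 2 := by
    rw [norm_mul, Real.norm_ofNat, Real.norm_eq_abs]
    nlinarith [abs_real_inner_le_norm (f z) (f' z), sq_nonneg (‖f z‖ - ‖f' z‖)]
  calc ‖f x‖ ^ 2 - ‖f y‖ ^ 2
      = ∫ z in y..x, 2 * ⟪f z, f' z⟫_ℝ :=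
        (intervalIntegral.integral_eq_sub_of_hasDerivAt (fun z hz => (hf z (hsub hz)).norm_sq)
          (hint (by fun_prop))).symm
    _ ≤ |∫ z in y..x, (‖f z‖ ^ 2 + ‖f' z‖ ^ 2)| :=
        (le_abs_self _).trans (intervalIntegral.norm_integral_le_abs_of_norm_le
          (Filter.Eventually.of_forall two_inner_le) (hint hsum))
    _ ≤ |∫ z in a..b, (‖f z‖ ^ 2 + ‖f' z‖ ^ 2)| :=
        intervalIntegral.abs_integral_mono_interval
          (by rw [uIoc_of_le hab]; exact Ioc_subset_Ioc (le_min hy.1 hx.1) (max_le hy.2 hx.2))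
          (Filter.Eventually.of_forall fun z => by positivity)
          (hsum.intervalIntegrable_of_Icc hab)
    _ = ∫ z in a..b, (‖f z‖ ^ 2 + ‖f' z‖ ^ 2) :=
        abs_of_nonneg (intervalIntegral.integral_nonneg hab fun z _ => by positivity)

lemma norm_sq_le_average_add_integral {x : ℝ} (hab : a < b)
    (hf : ∀ z ∈ Icc a b, HasDerivAt f (f' z) z) (hf' : ContinuousOn f' (Icc a b))
    (hx : x ∈ Icc a b) :
    ‖f x‖ ^ 2 ≤ (⨍ z in a..b, ‖f z‖ ^ 2) + ∫ z in a..b, (‖f z‖ ^ 2 + ‖f' z‖ ^ 2) := by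
  have hcf : ContinuousOn f (uIcc a b) := by
    rw [uIcc_of_le hab.le]
    exact fun z hz => (hf z hz).continuousAt.continuousWithinAt
  obtain ⟨y, hy, hmean⟩ := exists_eq_interval_average (f := fun z => ‖f z‖ ^ 2) hab.ne (by fun_prop)
  rw [uIoo_of_lt hab] at hy
  calc ‖f x‖ ^ 2 ≤ ‖f y‖ ^ 2 + ∫ z in a..b, (‖f z‖ ^ 2 + ‖f' z‖ ^ 2) :=
        sub_le_iff_le_add'.1 (norm_sq_sub_norm_sq_le_integral hf hf' hx (Ioo_subset_Icc_self hy))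
    _ = (⨍ z in a..b, ‖f z‖ ^ 2) + ∫ z in a..b, (‖f z‖ ^ 2 + ‖f' z‖ ^ 2) := by rw [← hmean]

end Calculus

section CrossProduct

lemma inner_eq_dotProduct (a b : E3) : ⟪a, b⟫_ℝ = a.ofLp ⬝ᵥ b.ofLp := by
  rw [EuclideanSpace.inner_eq_star_dotProduct, star_trivial, dotProduct_comm]

lemma inner_self_cross3 (a b : E3) : ⟪a, cross3 a b⟫_ℝ = 0 := by
  rw [inner_eq_dotProduct]
  exact dot_self_cross a.ofLp b.ofLp

lemma inner_cross3_self (a b : E3) : ⟪a, cross3 b a⟫_ℝ = 0 := by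
  rw [inner_eq_dotProduct]
  exact dot_cross_self b.ofLp a.ofLp

lemma norm_cross3_sq (a b : E3) : ‖cross3 a b‖ ^ 2 = ‖a‖ ^ 2 * ‖b‖ ^ 2 - ⟪a, b⟫_ℝ ^ 2 := by
  rw [← real_inner_self_eq_norm_sq, ← real_inner_self_eq_norm_sq, ← real_inner_self_eq_norm_sq, sq]
  nth_rw 5 [real_inner_comm]
  simp only [inner_eq_dotProduct]
  exact cross_dot_cross a.ofLp b.ofLp a.ofLp b.ofLp

lemma norm_cross3_le (a b : E3) : ‖cross3 a b‖ ≤ ‖a‖ * ‖b‖ :=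
  le_of_sq_le_sq (by rw [norm_cross3_sq, mul_pow]; exact sub_le_self _ (sq_nonneg _))
    (by positivity)

lemma abs_inner_cross3_le (a b c : E3) : |⟪a, cross3 b c⟫_ℝ| ≤ ‖a‖ * (‖b‖ * ‖c‖) :=
  (abs_real_inner_le_norm _ _).trans (by gcongr; exact norm_cross3_le b c)

lemma cross3_cross3 (a b c : E3) : cross3 a (cross3 b c) = ⟪a, c⟫_ℝ • b - ⟪a, b⟫_ℝ • c := by
  rw [inner_eq_dotProduct, inner_eq_dotProduct, dotProduct_comm a.ofLp b.ofLp]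
  exact congrArg (WithLp.toLp 2) (cross_cross_eq_smul_sub_smul' a.ofLp b.ofLp c.ofLp)

/-- The cross product of `E3` as a continuous bilinear map, giving access to the product rule. -/
def cross3L : E3 →L[ℝ] E3 →L[ℝ] E3 :=
  (LinearMap.mk₂ ℝ cross3 (by simp [cross3]) (by simp [cross3]) (by simp [cross3])
    (by simp [cross3])).toContinuousBilinearMap

lemma hasDerivAt_cross3 {f g : ℝ → E3} {f' g' : E3} {x : ℝ} (hf : HasDerivAt f f' x)
    (hg : HasDerivAt g g' x) :
    HasDerivAt (fun y => cross3 (f y) (g y)) (cross3 (f x) g' + cross3 f' (g x)) x :=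
  cross3L.hasDerivAt_of_bilinear (fun _ => hf) (fun _ => hg)

@[fun_prop]
lemma continuous_cross3 {X : Type*} [TopologicalSpace X] {f g : X → E3} (hf : Continuous f)
    (hg : Continuous g) : Continuous fun y => cross3 (f y) (g y) :=
  cross3L.continuous₂.comp (hf.prodMk hg)

lemma cross3_add_right (a b c : E3) : cross3 a (b + c) = cross3 a b + cross3 a c :=
  map_add (cross3L a) b c

lemma cross3_sub_right (a b c : E3) : cross3 a (b - c) = cross3 a b - cross3 a c :=
  map_sub (cross3L a) b c

lemma cross3_neg_right (a b : E3) : cross3 a (-b) = -cross3 a b :=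
  map_neg (cross3L a) b

lemma cross3_smul_right (r : ℝ) (a b : E3) : cross3 a (r • b) = r • cross3 a b :=
  map_smul (cross3L a) r b

end CrossProduct

section PartialDerivatives

/-- Joint smoothness in `(x, t)`, the regularity of solutions; this class is closed under `pdx` and
`pdt`. -/
def JointlySmooth (w : ℝ → ℝ → E3) : Prop := ContDiff ℝ ∞ fun p : ℝ × ℝ => w p.1 p.2

namespace JointlySmooth

variable {w : ℝ → ℝ → E3}

lemma continuous (hw : JointlySmooth w) : Continuous fun p : ℝ × ℝ => w p.1 p.2 :=
  ContDiff.continuous hw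

lemma continuous_slice (hw : JointlySmooth w) (t : ℝ) : Continuous fun x => w x t :=
  hw.continuous.comp (Continuous.prodMk_left t)

lemma hasFDerivAt (hw : JointlySmooth w) (p : ℝ × ℝ) :
    HasFDerivAt (fun q : ℝ × ℝ => w q.1 q.2) (fderiv ℝ (fun q : ℝ × ℝ => w q.1 q.2) p) p :=
  (ContDiff.differentiable hw (by simp) p).hasFDerivAt

lemma contDiff_fderiv (hw : JointlySmooth w) :
    ContDiff ℝ ∞ (fderiv ℝ fun q : ℝ × ℝ => w q.1 q.2) :=
  ContDiff.fderiv_right hw (by simp)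

lemma hasDerivAt_fst (hw : JointlySmooth w) (x t : ℝ) :
    HasDerivAt (fun y => w y t) (fderiv ℝ (fun q : ℝ × ℝ => w q.1 q.2) (x, t) (1, 0)) x :=
  HasFDerivAt.comp_hasDerivAt (f := fun y => (y, t)) x (hw.hasFDerivAt (x, t))
    ((hasDerivAt_id x).prodMk (hasDerivAt_const x t))

lemma hasDerivAt_snd (hw : JointlySmooth w) (x t : ℝ) :
    HasDerivAt (fun s => w x s) (fderiv ℝ (fun q : ℝ × ℝ => w q.1 q.2) (x, t) (0, 1)) t :=
  HasFDerivAt.comp_hasDerivAt (f := fun s => (x, s)) t (hw.hasFDerivAt (x, t))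
    ((hasDerivAt_const t x).prodMk (hasDerivAt_id t))

lemma pdx_eq_fderiv (hw : JointlySmooth w) (x t : ℝ) :
    pdx w x t = fderiv ℝ (fun q : ℝ × ℝ => w q.1 q.2) (x, t) (1, 0) :=
  (hw.hasDerivAt_fst x t).deriv

lemma pdt_eq_fderiv (hw : JointlySmooth w) (x t : ℝ) :
    pdt w x t = fderiv ℝ (fun q : ℝ × ℝ => w q.1 q.2) (x, t) (0, 1) :=
  (hw.hasDerivAt_snd x t).deriv

lemma hasDerivAt_pdx (hw : JointlySmooth w) (x t : ℝ) :
    HasDerivAt (fun y => w y t) (pdx w x t) x :=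
  (hw.hasDerivAt_fst x t).differentiableAt.hasDerivAt

lemma hasDerivAt_pdt (hw : JointlySmooth w) (x t : ℝ) :
    HasDerivAt (fun s => w x s) (pdt w x t) t :=
  (hw.hasDerivAt_snd x t).differentiableAt.hasDerivAt

protected lemma pdx (hw : JointlySmooth w) : JointlySmooth (pdx w) := by
  simpa only [JointlySmooth, hw.pdx_eq_fderiv] using hw.contDiff_fderiv.clm_apply contDiff_const

protected lemma pdt (hw : JointlySmooth w) : JointlySmooth (pdt w) := by
  simpa only [JointlySmooth, hw.pdt_eq_fderiv] using hw.contDiff_fderiv.clm_apply contDiff_const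

lemma pdt_pdx (hw : JointlySmooth w) : pdt (pdx w) = pdx (pdt w) := by
  funext x t
  have hd : DifferentiableAt ℝ (fderiv ℝ fun q : ℝ × ℝ => w q.1 q.2) (x, t) :=
    hw.contDiff_fderiv.differentiable (by simp) _
  have hsymm : IsSymmSndFDerivAt ℝ (fun q : ℝ × ℝ => w q.1 q.2) (x, t) :=
    (ContDiff.contDiffAt hw).isSymmSndFDerivAt (by
      rw [minSmoothness_of_isRCLikeNormedField]
      exact WithTop.coe_le_coe.2 le_top)
  rw [hw.pdx.pdt_eq_fderiv, hw.pdt.pdx_eq_fderiv]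
  simp only [hw.pdx_eq_fderiv, hw.pdt_eq_fderiv, Prod.mk.eta]
  rw [fderiv_clm_apply hd (by fun_prop), fderiv_clm_apply hd (by fun_prop)]
  simpa using hsymm.eq (0, 1) (1, 0)

end JointlySmooth

end PartialDerivatives

section SquaredNorms

lemma L2sq_nonneg (f : ℝ → E3) : 0 ≤ L2sq f :=
  intervalIntegral.integral_nonneg zero_le_one fun _ _ => sq_nonneg _

lemma Hsq_two (f : ℝ → E3) : Hsq 2 f = L2sq f + L2sq (deriv f) + L2sq (deriv^[2] f) := by
  simp only [Hsq, Finset.sum_range_succ, Finset.sum_range_zero, zero_add]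
  rfl

lemma integral_norm_sq_combination {f g h : ℝ → E3} (hf : Continuous f) (hg : Continuous g)
    (hh : Continuous h) (α β γ : ℝ) :
    ∫ x in (0 : ℝ)..1, (α * ‖f x‖ ^ 2 + β * ‖g x‖ ^ 2 + γ * ‖h x‖ ^ 2) =
      α * L2sq f + β * L2sq g + γ * L2sq h := by
  rw [intervalIntegral.integral_add (Continuous.intervalIntegrable (by fun_prop) _ _)
      (Continuous.intervalIntegrable (by fun_prop) _ _),
    intervalIntegral.integral_add (Continuous.intervalIntegrable (by fun_prop) _ _)
      (Continuous.intervalIntegrable (by fun_prop) _ _)]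
  simp only [intervalIntegral.integral_const_mul, L2sq]

namespace JointlySmooth

variable {w : ℝ → ℝ → E3}

lemma norm_sq_le_L2sq (hw : JointlySmooth w) {x : ℝ} (hx : x ∈ Icc (0 : ℝ) 1) (t : ℝ) :
    ‖w x t‖ ^ 2 ≤ 2 * L2sq (fun y => w y t) + L2sq (fun y => pdx w y t) := by
  have hcw := hw.continuous_slice t
  have hcdw := hw.pdx.continuous_slice t
  have h := norm_sq_le_average_add_integral one_pos (fun z _ => hw.hasDerivAt_pdx z t)
    hcdw.continuousOn hx
  rw [interval_average_eq, sub_zero, inv_one, one_smul, intervalIntegral.integral_add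
    (Continuous.intervalIntegrable (by fun_prop) _ _)
    (Continuous.intervalIntegrable (by fun_prop) _ _)] at h
  unfold L2sq
  linarith

lemma hasDerivAt_L2sq (hw : JointlySmooth w) (t : ℝ) :
    HasDerivAt (fun s => L2sq fun x => w x s)
      (2 * ∫ x in (0 : ℝ)..1, ⟪w x t, pdt w x t⟫_ℝ) t := by
  have hcont : Continuous fun p : ℝ × ℝ => 2 * ⟪w p.2 p.1, pdt w p.2 p.1⟫_ℝ :=
    continuous_const.mul
      ((hw.continuous.comp continuous_swap).inner (hw.pdt.continuous.comp continuous_swap))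
  rw [← intervalIntegral.integral_const_mul]
  exact hasDerivAt_intervalIntegral_of_continuous
    (f' := fun s x => 2 * ⟪w x s, pdt w x s⟫_ℝ)
    (fun s => (hw.continuous_slice s).norm.pow 2) hcont
    (fun s x => (hw.hasDerivAt_pdt x s).norm_sq) 0 1 t

end JointlySmooth

/-- The quantity `‖u(·,t)‖²_{H²} + ‖∂ₜu(·,t)‖²_{L²} + 1` whose cube is the growth rate in the
differential inequality. -/
def controlSq (u : ℝ → ℝ → E3) (t : ℝ) : ℝ :=
  Hsq 2 (fun x => u x t) + L2sq (fun x => pdt u x t) + 1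

lemma controlSq_eq (u : ℝ → ℝ → E3) (t : ℝ) :
    controlSq u t = L2sq (fun x => u x t) + L2sq (fun x => pdx u x t)
      + L2sq (fun x => pdx (pdx u) x t) + L2sq (fun x => pdt u x t) + 1 := by
  rw [controlSq, Hsq_two]
  rfl

lemma one_le_controlSq (u : ℝ → ℝ → E3) (t : ℝ) : 1 ≤ controlSq u t := by
  linarith [controlSq_eq u t, L2sq_nonneg fun x => u x t, L2sq_nonneg fun x => pdx u x t,
    L2sq_nonneg fun x => pdx (pdx u) x t, L2sq_nonneg fun x => pdt u x t]

lemma L2sq_pdt_add_L2sq_pdx_pdx_le (u : ℝ → ℝ → E3) (t : ℝ) :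
    L2sq (fun x => pdt u x t) + L2sq (fun x => pdx (pdx u) x t) ≤ controlSq u t := by
  linarith [controlSq_eq u t, L2sq_nonneg fun x => u x t, L2sq_nonneg fun x => pdx u x t]

variable {u : ℝ → ℝ → E3} {x t : ℝ}

lemma norm_sq_pdx_le_controlSq (hu : JointlySmooth u) (hx : x ∈ Icc (0 : ℝ) 1) :
    ‖pdx u x t‖ ^ 2 ≤ 2 * controlSq u t := by
  linarith [hu.pdx.norm_sq_le_L2sq hx t, controlSq_eq u t, L2sq_nonneg fun x => u x t,
    L2sq_nonneg fun x => pdx (pdx u) x t, L2sq_nonneg fun x => pdt u x t]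

lemma norm_sq_pdt_le_controlSq (hu : JointlySmooth u) (hx : x ∈ Icc (0 : ℝ) 1) :
    ‖pdt u x t‖ ^ 2 ≤ 2 * controlSq u t + L2sq (fun y => pdx (pdt u) y t) := by
  linarith [hu.pdt.norm_sq_le_L2sq hx t, L2sq_pdt_add_L2sq_pdx_pdx_le u t,
    L2sq_nonneg fun x => pdx (pdx u) x t]

end SquaredNorms

namespace IsSol

variable {T : ℝ} {u : ℝ → ℝ → E3} {x t : ℝ}

lemma jointlySmooth (hu : IsSol T u) : JointlySmooth u := hu.1

lemma norm_eq_one (hu : IsSol T u) (hx : x ∈ Icc (0 : ℝ) 1) (ht : t ∈ Icc 0 T) : ‖u x t‖ = 1 :=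
  hu.2.1 x hx t ht

lemma pdt_eq (hu : IsSol T u) (hx : x ∈ Icc (0 : ℝ) 1) (ht : t ∈ Icc 0 T) :
    pdt u x t = cross3 (u x t) (pdx (pdx u) x t) :=
  hu.2.2.1 x hx t ht

lemma inner_pdt_eq_zero (hu : IsSol T u) (hx : x ∈ Icc (0 : ℝ) 1) (ht : t ∈ Icc 0 T) :
    ⟪u x t, pdt u x t⟫_ℝ = 0 := by
  rw [hu.pdt_eq hx ht, inner_self_cross3]

lemma inner_pdx_pdt_eq (hu : IsSol T u) (hx : x ∈ Icc (0 : ℝ) 1) (ht : t ∈ Icc 0 T) :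
    ⟪u x t, pdx (pdt u) x t⟫_ℝ = -⟪pdx u x t, pdt u x t⟫_ℝ := by
  have h := hasDerivAt_unique_of_eqOn_Icc one_pos hx
    ((hu.jointlySmooth.hasDerivAt_pdx x t).inner ℝ (hu.jointlySmooth.pdt.hasDerivAt_pdx x t))
    (hasDerivAt_const x (0 : ℝ)) fun y hy => hu.inner_pdt_eq_zero hy ht
  linarith

lemma inner_pdx_pdx_eq (hu : IsSol T u) (hx : x ∈ Icc (0 : ℝ) 1) (ht : t ∈ Icc 0 T) :
    ⟪u x t, pdx (pdx u) x t⟫_ℝ = -‖pdx u x t‖ ^ 2 :=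
  inner_eq_neg_norm_sq_of_norm_eq_one (f' := fun y => pdx u y t) one_pos hx
    (fun y _ => hu.jointlySmooth.hasDerivAt_pdx y t) (hu.jointlySmooth.pdx.hasDerivAt_pdx x t)
    fun _ hy => hu.norm_eq_one hy ht

lemma pdx_pdx_eq (hu : IsSol T u) (hx : x ∈ Icc (0 : ℝ) 1) (ht : t ∈ Icc 0 T) :
    pdx (pdx u) x t = -cross3 (u x t) (pdt u x t) - ‖pdx u x t‖ ^ 2 • u x t := by
  rw [hu.pdt_eq hx ht, cross3_cross3, real_inner_self_eq_norm_sq, hu.norm_eq_one hx ht,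
    hu.inner_pdx_pdx_eq hx ht]
  module

lemma pdx_pdx_pdx_eq (hu : IsSol T u) (hx : x ∈ Icc (0 : ℝ) 1) (ht : t ∈ Icc 0 T) :
    pdx (pdx (pdx u)) x t =
      -(cross3 (u x t) (pdx (pdt u) x t) + cross3 (pdx u x t) (pdt u x t))
        - (‖pdx u x t‖ ^ 2 • pdx u x t
          + (2 * ⟪pdx u x t, pdx (pdx u) x t⟫_ℝ) • u x t) := by
  have hs := hu.jointlySmooth
  have hrhs := (hasDerivAt_cross3 (hs.hasDerivAt_pdx x t) (hs.pdt.hasDerivAt_pdx x t)).neg.sub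
    ((hs.pdx.hasDerivAt_pdx x t).norm_sq.smul (hs.hasDerivAt_pdx x t))
  exact hasDerivAt_unique_of_eqOn_Icc one_pos hx (hs.pdx.pdx.hasDerivAt_pdx x t) hrhs
    fun y hy => hu.pdx_pdx_eq hy ht

lemma pdt_pdt_eq (hu : IsSol T u) (hT : 0 < T) (hx : x ∈ Icc (0 : ℝ) 1) (ht : t ∈ Icc 0 T) :
    pdt (pdt u) x t =
      cross3 (u x t) (pdx (pdx (pdt u)) x t) + cross3 (pdt u x t) (pdx (pdx u) x t) := by
  have hs := hu.jointlySmooth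
  rw [← hs.pdt_pdx, ← hs.pdx.pdt_pdx]
  exact hasDerivAt_unique_of_eqOn_Icc hT ht (hs.pdt.hasDerivAt_pdt x t)
    (hasDerivAt_cross3 (hs.hasDerivAt_pdt x t) (hs.pdx.pdx.hasDerivAt_pdt x t))
    fun r hr => hu.pdt_eq hx hr

lemma pdx_pdt_boundary (hu : IsSol T u) (hT : 0 < T) (ht : t ∈ Icc 0 T) :
    pdx (pdt u) 0 t = 0 ∧ pdx (pdt u) 1 t = 0 := by
  have hs := hu.jointlySmooth
  rw [← hs.pdt_pdx]
  exact ⟨hasDerivAt_unique_of_eqOn_Icc hT ht (hs.pdx.hasDerivAt_pdt 0 t) (hasDerivAt_const t 0)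
      fun r hr => (hu.2.2.2 r hr).1,
    hasDerivAt_unique_of_eqOn_Icc hT ht (hs.pdx.hasDerivAt_pdt 1 t) (hasDerivAt_const t 0)
      fun r hr => (hu.2.2.2 r hr).2⟩

lemma hasDerivAt_inner_pdx_pdt_sub (hu : IsSol T u) (hT : 0 < T) (hx : x ∈ Icc (0 : ℝ) 1)
    (ht : t ∈ Icc 0 T) :
    HasDerivAt
      (fun y => ⟪pdx (pdt u) y t, pdt (pdt u) y t - cross3 (pdt u y t) (pdx (pdx u) y t)⟫_ℝ)
      (⟪pdx (pdt u) x t, pdx (pdt (pdt u)) x t⟫_ℝ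
        - ⟪pdx (pdt u) x t, cross3 (pdt u x t) (pdx (pdx (pdx u)) x t)⟫_ℝ) x := by
  have hs := hu.jointlySmooth
  refine ((hs.pdt.pdx.hasDerivAt_pdx x t).inner ℝ ((hs.pdt.pdt.hasDerivAt_pdx x t).sub
    (hasDerivAt_cross3 (hs.pdt.hasDerivAt_pdx x t)
      (hs.pdx.pdx.hasDerivAt_pdx x t)))).congr_deriv ?_
  simp only [Pi.sub_apply, hu.pdt_pdt_eq hT hx ht, add_sub_cancel_right, inner_sub_right,
    inner_add_right, inner_self_cross3, inner_cross3_self]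
  ring

lemma integral_inner_pdx_pdt_pdt_eq (hu : IsSol T u) (hT : 0 < T) (ht : t ∈ Icc 0 T) :
    ∫ x in (0 : ℝ)..1, ⟪pdx (pdt u) x t, pdx (pdt (pdt u)) x t⟫_ℝ =
      ∫ x in (0 : ℝ)..1, ⟪pdx (pdt u) x t, cross3 (pdt u x t) (pdx (pdx (pdx u)) x t)⟫_ℝ := by
  have hs := hu.jointlySmooth
  have hu3 := hs.pdx.pdx.pdx.continuous_slice t
  have hv := hs.pdt.continuous_slice t
  have hw := hs.pdt.pdx.continuous_slice t
  have hwt := hs.pdt.pdt.pdx.continuous_slice t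
  rw [← sub_eq_zero, ← intervalIntegral.integral_sub
    (Continuous.intervalIntegrable (by fun_prop) _ _)
    (Continuous.intervalIntegrable (by fun_prop) _ _),
    intervalIntegral.integral_eq_sub_of_hasDerivAt
      (fun x hx => hu.hasDerivAt_inner_pdx_pdt_sub hT (uIcc_of_le (zero_le_one' ℝ) ▸ hx) ht)
      (Continuous.intervalIntegrable (by fun_prop) _ _),
    (hu.pdx_pdt_boundary hT ht).1, (hu.pdx_pdt_boundary hT ht).2, inner_zero_left,
    inner_zero_left, sub_zero]

lemma hasDerivAt_L2sq_pdx_pdt (hu : IsSol T u) (hT : 0 < T) (ht : t ∈ Icc 0 T) :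
    HasDerivAt (fun s => L2sq fun x => pdx (pdt u) x s)
      (2 * ∫ x in (0 : ℝ)..1, ⟪pdx (pdt u) x t, cross3 (pdt u x t) (pdx (pdx (pdx u)) x t)⟫_ℝ)
      t := by
  rw [← hu.integral_inner_pdx_pdt_pdt_eq hT ht, ← hu.jointlySmooth.pdt.pdt_pdx]
  exact hu.jointlySmooth.pdt.pdx.hasDerivAt_L2sq t

lemma inner_cross3_pdx_pdx_pdx_eq (hu : IsSol T u) (hx : x ∈ Icc (0 : ℝ) 1) (ht : t ∈ Icc 0 T) :
    ⟪pdx (pdt u) x t, cross3 (pdt u x t) (pdx (pdx (pdx u)) x t)⟫_ℝ =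
      2 * ⟪pdx u x t, pdt u x t⟫_ℝ * ⟪pdt u x t, pdx (pdt u) x t⟫_ℝ
        - ‖pdt u x t‖ ^ 2 * ⟪pdx u x t, pdx (pdt u) x t⟫_ℝ
        - ‖pdx u x t‖ ^ 2 * ⟪pdx (pdt u) x t, cross3 (pdt u x t) (pdx u x t)⟫_ℝ
        - 2 * ⟪pdx u x t, pdx (pdx u) x t⟫_ℝ
          * ⟪pdx (pdt u) x t, cross3 (pdt u x t) (u x t)⟫_ℝ := by
  have huv := hu.inner_pdt_eq_zero hx ht
  have huw := hu.inner_pdx_pdt_eq hx ht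
  rw [real_inner_comm] at huv huw
  rw [hu.pdx_pdx_pdx_eq hx ht]
  simp only [cross3_sub_right, cross3_neg_right, cross3_add_right, cross3_smul_right,
    cross3_cross3, inner_sub_right, inner_neg_right, inner_add_right, real_inner_smul_right,
    real_inner_self_eq_norm_sq, huv, huw]
  rw [real_inner_comm (pdt u x t) (pdx u x t), real_inner_comm (pdx (pdt u) x t) (pdt u x t),
    real_inner_comm (pdx (pdt u) x t) (pdx u x t)]
  ring

lemma inner_cross3_pdx_pdx_pdx_le (hu : IsSol T u) (hx : x ∈ Icc (0 : ℝ) 1) (ht : t ∈ Icc 0 T) :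
    ⟪pdx (pdt u) x t, cross3 (pdt u x t) (pdx (pdx (pdx u)) x t)⟫_ℝ ≤
      3 * ‖pdx u x t‖ ^ 2 * ‖pdx (pdt u) x t‖ ^ 2
        + (3 / 2 * ‖pdt u x t‖ ^ 2 + 1 / 2 * (‖pdx u x t‖ ^ 2) ^ 2) * ‖pdt u x t‖ ^ 2
        + ‖pdt u x t‖ ^ 2 * ‖pdx (pdx u) x t‖ ^ 2 := by
  rw [hu.inner_cross3_pdx_pdx_pdx_eq hx ht]
  have hnorm := hu.norm_eq_one hx ht
  generalize u x t = a, pdx u x t = b, pdx (pdx u) x t = c, pdt u x t = v,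
    pdx (pdt u) x t = w at *
  calc 2 * ⟪b, v⟫_ℝ * ⟪v, w⟫_ℝ - ‖v‖ ^ 2 * ⟪b, w⟫_ℝ - ‖b‖ ^ 2 * ⟪w, cross3 v b⟫_ℝ
        - 2 * ⟪b, c⟫_ℝ * ⟪w, cross3 v a⟫_ℝ
      ≤ 2 * (|⟪b, v⟫_ℝ| * |⟪v, w⟫_ℝ|) + ‖v‖ ^ 2 * |⟪b, w⟫_ℝ| + ‖b‖ ^ 2 * |⟪w, cross3 v b⟫_ℝ|
        + 2 * (|⟪b, c⟫_ℝ| * |⟪w, cross3 v a⟫_ℝ|) := by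
        rw [← abs_mul, ← abs_mul]
        linarith [le_abs_self (⟪b, v⟫_ℝ * ⟪v, w⟫_ℝ), neg_le_abs (⟪b, c⟫_ℝ * ⟪w, cross3 v a⟫_ℝ),
          mul_le_mul_of_nonneg_left (neg_le_abs ⟪b, w⟫_ℝ) (sq_nonneg ‖v‖),
          mul_le_mul_of_nonneg_left (neg_le_abs ⟪w, cross3 v b⟫_ℝ) (sq_nonneg ‖b‖)]
    _ ≤ 2 * ((‖b‖ * ‖v‖) * (‖v‖ * ‖w‖)) + ‖v‖ ^ 2 * (‖b‖ * ‖w‖)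
        + ‖b‖ ^ 2 * (‖w‖ * (‖v‖ * ‖b‖)) + 2 * ((‖b‖ * ‖c‖) * (‖w‖ * (‖v‖ * ‖a‖))) := by
        gcongr <;> first | exact abs_real_inner_le_norm _ _ | exact abs_inner_cross3_le _ _ _
    _ ≤ 3 * ‖b‖ ^ 2 * ‖w‖ ^ 2 + (3 / 2 * ‖v‖ ^ 2 + 1 / 2 * (‖b‖ ^ 2) ^ 2) * ‖v‖ ^ 2
        + ‖v‖ ^ 2 * ‖c‖ ^ 2 := by
        rw [hnorm]
        linarith [sq_nonneg (‖b‖ * ‖w‖ - ‖v‖ ^ 2), sq_nonneg (‖b‖ * ‖w‖ - ‖b‖ ^ 2 * ‖v‖),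
          sq_nonneg (‖b‖ * ‖w‖ - ‖v‖ * ‖c‖)]

lemma integral_inner_cross3_le (hu : IsSol T u) (ht : t ∈ Icc 0 T) {A E : ℝ}
    (hA : A = controlSq u t) (hE : E = L2sq fun x => pdx (pdt u) x t) :
    ∫ x in (0 : ℝ)..1, ⟪pdx (pdt u) x t, cross3 (pdt u x t) (pdx (pdx (pdx u)) x t)⟫_ℝ ≤
      3 * (2 * A) * E
        + (3 / 2 * (2 * A + E) + 1 / 2 * (2 * A) ^ 2) * L2sq (fun x => pdt u x t)
        + (2 * A + E) * L2sq (fun x => pdx (pdx u) x t) := by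
  have hs := hu.jointlySmooth
  have hu2 := hs.pdx.pdx.continuous_slice t
  have hu3 := hs.pdx.pdx.pdx.continuous_slice t
  have hv := hs.pdt.continuous_slice t
  have hw := hs.pdt.pdx.continuous_slice t
  calc ∫ x in (0 : ℝ)..1, ⟪pdx (pdt u) x t, cross3 (pdt u x t) (pdx (pdx (pdx u)) x t)⟫_ℝ
      ≤ ∫ x in (0 : ℝ)..1, (3 * (2 * A) * ‖pdx (pdt u) x t‖ ^ 2
        + (3 / 2 * (2 * A + E) + 1 / 2 * (2 * A) ^ 2) * ‖pdt u x t‖ ^ 2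
        + (2 * A + E) * ‖pdx (pdx u) x t‖ ^ 2) := by
        refine intervalIntegral.integral_mono_on zero_le_one
          (Continuous.intervalIntegrable (by fun_prop) _ _)
          (Continuous.intervalIntegrable (by fun_prop) _ _) fun x hx => ?_
        have hb : ‖pdx u x t‖ ^ 2 ≤ 2 * A := hA ▸ norm_sq_pdx_le_controlSq hs hx
        have hv : ‖pdt u x t‖ ^ 2 ≤ 2 * A + E := hA ▸ hE ▸ norm_sq_pdt_le_controlSq hs hx
        refine (hu.inner_cross3_pdx_pdx_pdx_le hx ht).trans ?_
        gcongr
    _ = 3 * (2 * A) * E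
        + (3 / 2 * (2 * A + E) + 1 / 2 * (2 * A) ^ 2) * L2sq (fun x => pdt u x t)
        + (2 * A + E) * L2sq (fun x => pdx (pdx u) x t) := by
        rw [integral_norm_sq_combination hw hv hu2, hE]

lemma integral_inner_cross3_le_controlSq (hu : IsSol T u) (ht : t ∈ Icc 0 T) :
    ∫ x in (0 : ℝ)..1, ⟪pdx (pdt u) x t, cross3 (pdt u x t) (pdx (pdx (pdx u)) x t)⟫_ℝ ≤
      15 / 2 * controlSq u t ^ 3 * (L2sq (fun x => pdx (pdt u) x t) + 1) := by
  have hbound := hu.integral_inner_cross3_le ht rfl rfl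
  have hA := one_le_controlSq u t
  have hVU := L2sq_pdt_add_L2sq_pdx_pdx_le u t
  have hU := L2sq_nonneg fun x => pdx (pdx u) x t
  have hE := L2sq_nonneg fun x => pdx (pdt u) x t
  generalize controlSq u t = A, L2sq (fun x => pdx (pdt u) x t) = E,
    L2sq (fun x => pdt u x t) = V, L2sq (fun x => pdx (pdx u) x t) = U at *
  have hA3 : A ≤ A ^ 3 := le_self_pow₀ hA (by norm_num)
  have hA23 : A ^ 2 ≤ A ^ 3 := pow_le_pow_right₀ hA (by norm_num)
  have hcoef : 2 * A + E ≤ 3 / 2 * (2 * A + E) + 1 / 2 * (2 * A) ^ 2 := by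
    linarith [sq_nonneg (2 * A)]
  calc _ ≤ 3 * (2 * A) * E + (3 / 2 * (2 * A + E) + 1 / 2 * (2 * A) ^ 2) * V
        + (2 * A + E) * U := hbound
    _ ≤ 3 * (2 * A) * E + (3 / 2 * (2 * A + E) + 1 / 2 * (2 * A) ^ 2) * V
        + (3 / 2 * (2 * A + E) + 1 / 2 * (2 * A) ^ 2) * U := by
        linarith [mul_le_mul_of_nonneg_right hcoef hU]
    _ = 3 * (2 * A) * E + (3 / 2 * (2 * A + E) + 1 / 2 * (2 * A) ^ 2) * (V + U) := by ring
    _ ≤ 3 * (2 * A) * E + (3 / 2 * (2 * A + E) + 1 / 2 * (2 * A) ^ 2) * A := by gcongr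
    _ = 15 / 2 * A * E + (3 * A ^ 2 + 2 * A ^ 3) := by ring
    _ ≤ 15 / 2 * A ^ 3 * E + 15 / 2 * A ^ 3 := by gcongr ?_ + ?_ <;> [gcongr; linarith]
    _ = 15 / 2 * A ^ 3 * (E + 1) := by ring

end IsSol

theorem utx_differential_inequality_schrodinger_flow :
    ∃ C > (0:ℝ), ∀ T > (0:ℝ), ∀ u : ℝ → ℝ → E3, IsSol T u →
      ∀ t ∈ Icc (0:ℝ) T,
        deriv (fun s => ∫ x in (0:ℝ)..1, ‖pdt (pdx u) x s‖ ^ 2) t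
          ≤ C * (Hsq 2 (fun x => u x t) + L2sq (fun x => pdt u x t) + 1) ^ 3
            * ((∫ x in (0:ℝ)..1, ‖pdt (pdx u) x t‖ ^ 2) + 1) := by
  refine ⟨15, by norm_num, fun T hT u hu t ht => ?_⟩
  rw [hu.jointlySmooth.pdt_pdx]
  calc deriv (fun s => L2sq fun x => pdx (pdt u) x s) t
      = 2 * ∫ x in (0 : ℝ)..1, ⟪pdx (pdt u) x t, cross3 (pdt u x t) (pdx (pdx (pdx u)) x t)⟫_ℝ :=
        (hu.hasDerivAt_L2sq_pdx_pdt hT ht).deriv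
    _ ≤ 2 * (15 / 2 * controlSq u t ^ 3 * (L2sq (fun x => pdx (pdt u) x t) + 1)) := by
        gcongr
        exact hu.integral_inner_cross3_le_controlSq ht
    _ = 15 * controlSq u t ^ 3 * (L2sq (fun x => pdx (pdt u) x t) + 1) := by ring

end
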